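/- arXiv:1804.01325 — 2 statements merged into one kernel-verified Lean document; each statement's English description precedes it below -/
import Mathlib

section
/- L R L = −2 L. -/
open Matrix Finset
open scoped Kronecker

noncomputable section

/-- The `ns × s` matrix `1 ⊗ Iₛ`, where `1` is the all-ones column vector. -/
def oneKron (n s : ℕ) : Matrix (Fin n × Fin s) (Fin s) ℝ :=
  Matrix.of fun p b => if p.2 = b then 1 else 0

/-- The `ns × ns` matrix `J ⊗ Iₛ`, where `J` is the all-ones matrix. -/
def JKron (n s : ℕ) : Matrix (Fin n × Fin s) (Fin n × Fin s) ℝ :=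
  (Matrix.of fun _ _ : Fin n => (1 : ℝ)) ⊗ₖ (1 : Matrix (Fin s) (Fin s) ℝ)

/-- The Laplacian matrix of a graph whose edges `{i,j}` are weighted by
positive definite `s × s` matrices `W i j`: the `(i,i)` block is
`Σ_{j ∼ i} (W i j)⁻¹`, the `(i,j)` block for `i ≠ j` is `-(W i j)⁻¹` if `i ∼ j`
and `0` otherwise. -/
def lap {n s : ℕ} (G : SimpleGraph (Fin n)) [DecidableRel G.Adj]
    (W : Fin n → Fin n → Matrix (Fin s) (Fin s) ℝ) :
    Matrix (Fin n × Fin s) (Fin n × Fin s) ℝ :=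
  Matrix.of fun p q =>
    if p.1 = q.1 then (∑ k ∈ univ.filter (fun k => G.Adj p.1 k), (W p.1 k)⁻¹) p.2 q.2
    else if G.Adj p.1 q.1 then -((W p.1 q.1)⁻¹ p.2 q.2) else 0

/-- The four Penrose conditions: `Adag` is a Moore–Penrose inverse of `A`. -/
def IsMoorePenrose {m : Type*} [Fintype m] (A Adag : Matrix m m ℝ) : Prop :=
  A * Adag * A = A ∧ Adag * A * Adag = Adag ∧ (A * Adag)ᵀ = A * Adag ∧ (Adag * A)ᵀ = Adag * A

/-- The `s × s` block of an `ns × ns` matrix in block position `(i, j)`. -/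
def blk {n s : ℕ} (A : Matrix (Fin n × Fin s) (Fin n × Fin s) ℝ) (i j : Fin n) :
    Matrix (Fin s) (Fin s) ℝ :=
  Matrix.of fun a b => A (i, a) (j, b)

/-- The resistance matrix built from a Moore–Penrose inverse `Ldag` of the Laplacian:
its `(i,j)` block is `K_{ii} + K_{jj} - 2 K_{ij}`, where `K_{ij}` are the blocks of `Ldag`. -/
def resist {n s : ℕ} (Ldag : Matrix (Fin n × Fin s) (Fin n × Fin s) ℝ) :
    Matrix (Fin n × Fin s) (Fin n × Fin s) ℝ :=
  Matrix.of fun p q =>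
    Ldag (p.1, p.2) (p.1, q.2) + Ldag (q.1, p.2) (q.1, q.2) - 2 * Ldag p q

/-- The `ns × s` matrix `τ`, whose `i`-th block is `2 Iₛ - Σ_{j ∼ i} (W i j)⁻¹ R_{ji}`. -/
def tauMat {n s : ℕ} (G : SimpleGraph (Fin n)) [DecidableRel G.Adj]
    (W : Fin n → Fin n → Matrix (Fin s) (Fin s) ℝ)
    (R : Matrix (Fin n × Fin s) (Fin n × Fin s) ℝ) :
    Matrix (Fin n × Fin s) (Fin s) ℝ :=
  Matrix.of fun p b =>
    ((2 : ℝ) • (1 : Matrix (Fin s) (Fin s) ℝ) -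
      ∑ j ∈ univ.filter (fun j => G.Adj p.1 j), (W p.1 j)⁻¹ * blk R j p.1) p.2 b

/-- The block diagonal matrix `X̄` with the same diagonal blocks as `X`. -/
def bdiag {n s : ℕ} (X : Matrix (Fin n × Fin s) (Fin n × Fin s) ℝ) :
    Matrix (Fin n × Fin s) (Fin n × Fin s) ℝ :=
  Matrix.of fun p q => if p.1 = q.1 then X (p.1, p.2) (p.1, q.2) else 0

/-! Writing `K̄` for the block diagonal part of `K`, the resistance matrix is
`R = K̄ (J ⊗ Iₛ) + (J ⊗ Iₛ) K̄ - 2 K`. The block rows and block columns of `L` sum to zero, so `L`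
annihilates `J ⊗ Iₛ` on both sides and `L R L` collapses to `-2 L K L = -2 L`. -/

section BlockSums

variable {n s : ℕ} (A K : Matrix (Fin n × Fin s) (Fin n × Fin s) ℝ) (p q : Fin n × Fin s)

theorem mul_JKron_apply : (A * JKron n s) p q = ∑ j, A p (j, q.2) := by
  simp [JKron, mul_apply, Fintype.sum_prod_type, one_apply]

theorem JKron_mul_apply : (JKron n s * A) p q = ∑ i, A (i, p.2) q := by
  simp [JKron, mul_apply, Fintype.sum_prod_type, one_apply]

theorem resist_eq_bdiag_mul_JKron_add_sub :
    resist K = bdiag K * JKron n s + JKron n s * bdiag K - (2 : ℝ) • K := by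
  ext p q
  simp [resist, mul_JKron_apply, JKron_mul_apply, bdiag]

variable {A} in
theorem mul_resist_mul_of_mul_JKron_eq_zero
    (hAJ : A * JKron n s = 0) (hJA : JKron n s * A = 0) :
    A * resist K * A = (-2 : ℝ) • (A * K * A) := by
  have hleft : A * (bdiag K * JKron n s) * A = 0 := by
    simp only [Matrix.mul_assoc, hJA, Matrix.mul_zero]
  have hright : A * (JKron n s * bdiag K) * A = 0 := by
    simp only [← Matrix.mul_assoc, hAJ, Matrix.zero_mul]
  rw [resist_eq_bdiag_mul_JKron_add_sub, Matrix.mul_sub, Matrix.mul_add, Matrix.sub_mul,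
    Matrix.add_mul, hleft, hright, add_zero, zero_sub, Matrix.mul_smul, Matrix.smul_mul, neg_smul]

end BlockSums

section Laplacian

variable {n s : ℕ} (G : SimpleGraph (Fin n)) [DecidableRel G.Adj]
  (W : Fin n → Fin n → Matrix (Fin s) (Fin s) ℝ)

theorem lap_apply (i j : Fin n) (a b : Fin s) :
    lap G W (i, a) (j, b) =
      (if i = j then ∑ k with G.Adj i k, (W i k)⁻¹ a b else 0) -
        if G.Adj i j then (W i j)⁻¹ a b else 0 := by
  by_cases hij : i = j
  · subst hij
    simp [lap, Matrix.sum_apply]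
  · by_cases hadj : G.Adj i j <;> simp [lap, hij, hadj]

theorem sum_lap_block_row (i : Fin n) (a b : Fin s) : ∑ j, lap G W (i, a) (j, b) = 0 := by
  simp [lap_apply, sum_filter]

theorem lap_mul_JKron : lap G W * JKron n s = 0 := by
  ext ⟨i, a⟩ ⟨j, b⟩
  rw [mul_JKron_apply, sum_lap_block_row, Matrix.zero_apply]

variable {W}

theorem sum_lap_block_column (hW : ∀ i j, G.Adj i j → W i j = W j i) (j : Fin n) (a b : Fin s) :
    ∑ i, lap G W (i, a) (j, b) = 0 := by
  have hswap : ∀ i, (if G.Adj i j then (W i j)⁻¹ a b else 0) =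
      if G.Adj j i then (W j i)⁻¹ a b else 0 := by
    intro i
    by_cases hadj : G.Adj j i
    · simp [hadj, hadj.symm, hW j i hadj]
    · simp [hadj, G.adj_comm i j]
  simp [lap_apply, sum_filter, hswap]

theorem JKron_mul_lap (hW : ∀ i j, G.Adj i j → W i j = W j i) : JKron n s * lap G W = 0 := by
  ext ⟨i, a⟩ ⟨j, b⟩
  rw [JKron_mul_apply, sum_lap_block_column G hW, Matrix.zero_apply]

end Laplacian

theorem lap_mul_resist_mul_lap_general {n s : ℕ} (G : SimpleGraph (Fin n)) [DecidableRel G.Adj]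
    (W : Fin n → Fin n → Matrix (Fin s) (Fin s) ℝ)
    (hWsymm : ∀ i j, G.Adj i j → W i j = W j i)
    (hWunit : ∀ i j, G.Adj i j → IsUnit (W i j))
    (K : Matrix (Fin n × Fin s) (Fin n × Fin s) ℝ)
    (hK : lap G W * K * lap G W = lap G W) :
    lap G W * resist K * lap G W = (-2 : ℝ) • lap G W := by
  rw [mul_resist_mul_of_mul_JKron_eq_zero K (lap_mul_JKron G W) (JKron_mul_lap G hWsymm), hK]

/-- `L R L = -2 L`. -/
theorem lap_mul_resist_mul_lap
    (n s : ℕ) (hn : 2 ≤ n) (hs : 1 ≤ s)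
    (G : SimpleGraph (Fin n)) [DecidableRel G.Adj] (hconn : G.Connected)
    (W : Fin n → Fin n → Matrix (Fin s) (Fin s) ℝ)
    (hWsymm : ∀ i j, W i j = W j i)
    (hWpd : ∀ i j, G.Adj i j → (W i j).PosDef)
    (hPSD : (lap G W).PosSemidef)
    (hrank : (lap G W).rank = n * s - s)
    (hker : ∀ v : Fin n × Fin s → ℝ,
      lap G W *ᵥ v = 0 ↔ ∃ c : Fin s → ℝ, v = oneKron n s *ᵥ c)
    (Ldag : Matrix (Fin n × Fin s) (Fin n × Fin s) ℝ)
    (hMP : IsMoorePenrose (lap G W) Ldag)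
    (R : Matrix (Fin n × Fin s) (Fin n × Fin s) ℝ)
    (hR : R = resist Ldag) :
    lap G W * R * lap G W = (-2 : ℝ) • lap G W := by
  subst hR
  exact lap_mul_resist_mul_lap_general G W (fun i j _ ↦ hWsymm i j)
    (fun i j hij ↦ (hWpd i j hij).isUnit) Ldag hMP.1
end
end

section
/- The s×s matrix τᵀ R τ is positive definite, and τᵀ R τ = 2 x̄ᵀ L x̄ + (8/n)(Σ_{i=1}^n X_{ii} − I_s), where x̄ = X̄ (1 ⊗ I_s). -/
open Matrix Finset
open scoped Kronecker

noncomputable section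

/-!
Write `E = 1 ⊗ Iₛ` and `P = (1/n) J ⊗ Iₛ`, the orthogonal projection onto `ker L`. Then
`X = L† + P`, so `L X = 1 - P` and `X E = E`. Adding multiples of `J ⊗ Iₛ` does not change the
resistance matrix, hence `R = X̄ (J ⊗ Iₛ) + (J ⊗ Iₛ) X̄ - 2 X`. Comparing the diagonal blocks of
`L R + 2 I = (L x̄ + (2/n) E) Eᵀ` gives `τ = L x̄ + (2/n) E`, so `Eᵀ τ = 2 Iₛ` and
`τᵀ R τ = 2 (τᵀ x̄ + x̄ᵀ τ - τᵀ X τ)`, which expands to the stated formula.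

For positivity, `Σᵢ X_{ii} - Iₛ = Σᵢ K_{ii}`, and each `K_{ii}` is positive definite: `L†` is
positive semidefinite, and since `n ≥ 2` no nonzero vector supported on a single block lies in its
kernel, the column space of `E`.
-/

/-- `P` is the orthogonal projection onto the kernel of `A`. Only symmetry, `A P = 0` and the fact
that `P` fixes the kernel are recorded; idempotence follows. -/
structure IsKerProj {m : Type*} [Fintype m] (A P : Matrix m m ℝ) : Prop where
  isSymm : P.IsSymm
  mul_eq_zero : A * P = 0
  mulVec_eq_self : ∀ v, A *ᵥ v = 0 → P *ᵥ v = v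

theorem IsKerProj.mul_eq_self_of_mul_eq_zero {l m : Type*} [Fintype m] {A P : Matrix m m ℝ}
    (hP : IsKerProj A P) {B : Matrix m l ℝ} (hB : A * B = 0) : P * B = B := by
  ext i j
  exact congrFun (hP.mulVec_eq_self (B.col j) (funext fun k => congrFun₂ hB k j)) i

namespace IsMoorePenrose

variable {m : Type*} [Fintype m] {A K K' P : Matrix m m ℝ}

theorem transpose (h : IsMoorePenrose A K) : IsMoorePenrose Aᵀ Kᵀ := by
  obtain ⟨hAKA, hKAK, hAK, hKA⟩ := h
  refine ⟨?_, ?_, ?_, ?_⟩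
  · rw [← transpose_mul, ← transpose_mul, ← Matrix.mul_assoc, hAKA]
  · rw [← transpose_mul, ← transpose_mul, ← Matrix.mul_assoc, hKAK]
  · rw [← transpose_mul, hKA, hKA]
  · rw [← transpose_mul, hAK, hAK]

theorem mul_eq_mul (h : IsMoorePenrose A K) (h' : IsMoorePenrose A K') : A * K = A * K' :=
  calc A * K = (A * K')ᵀ * (A * K)ᵀ := by
        rw [h'.2.2.1, h.2.2.1, ← Matrix.mul_assoc, h'.1]
    _ = A * K' := by
        rw [← transpose_mul, ← Matrix.mul_assoc, h.1, h'.2.2.1]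

theorem unique (h : IsMoorePenrose A K) (h' : IsMoorePenrose A K') : K = K' := by
  have hKA : K * A = K' * A := transpose_injective <| by
    simpa only [transpose_mul] using h.transpose.mul_eq_mul h'.transpose
  calc K = K' * A * K := by rw [← hKA, h.2.1]
    _ = K' := by rw [Matrix.mul_assoc, h.mul_eq_mul h', ← Matrix.mul_assoc, h'.2.1]

theorem isSymm (h : IsMoorePenrose A K) (hA : A.IsSymm) : K.IsSymm :=
  (hA.eq ▸ h.transpose).unique h

theorem commute (h : IsMoorePenrose A K) (hA : A.IsSymm) : Commute A K := by
  rw [Commute, SemiconjBy, ← h.2.2.1, transpose_mul, hA.eq, (h.isSymm hA).eq]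

theorem posSemidef (h : IsMoorePenrose A K) (hA : A.PosSemidef) : K.PosSemidef := by
  have hK : Kᴴ = K := h.isSymm hA.isHermitian
  simpa only [hK, h.2.1] using hA.conjTranspose_mul_mul_same K

theorem mulVec_eq_zero_of_mulVec_eq_zero (h : IsMoorePenrose A K) (hA : A.IsSymm) {v : m → ℝ}
    (hv : K *ᵥ v = 0) : A *ᵥ v = 0 := by
  rw [← h.1, Matrix.mul_assoc, ← (h.commute hA).eq, ← mulVec_mulVec, ← mulVec_mulVec, hv,
    mulVec_zero, mulVec_zero]

theorem mul_kerProj (h : IsMoorePenrose A K) (hA : A.IsSymm) (hP : IsKerProj A P) : K * P = 0 := by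
  rw [← h.2.1, Matrix.mul_assoc K, (h.commute hA).eq, Matrix.mul_assoc, Matrix.mul_assoc,
    hP.mul_eq_zero, Matrix.mul_zero, Matrix.mul_zero]

variable [DecidableEq m]

theorem mul_eq_one_sub (h : IsMoorePenrose A K) (hP : IsKerProj A P) : K * A = 1 - P := by
  have hPKA : P * (K * A) = 0 := by
    rw [← hP.isSymm.eq, ← h.2.2.2, ← transpose_mul, Matrix.mul_assoc, hP.mul_eq_zero,
      Matrix.mul_zero, transpose_zero]
  have hPsub : P * (1 - K * A) = 1 - K * A := hP.mul_eq_self_of_mul_eq_zero <| by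
    rw [Matrix.mul_sub, Matrix.mul_one, ← Matrix.mul_assoc, h.1, sub_self]
  rw [Matrix.mul_sub, Matrix.mul_one, hPKA, sub_zero] at hPsub
  rw [hPsub, sub_sub_cancel]

theorem inv_add_kerProj (h : IsMoorePenrose A K) (hA : A.IsSymm) (hP : IsKerProj A P) :
    (A + P)⁻¹ = K + P := by
  have hPA : P * A = 0 := by
    rw [← hP.isSymm.eq, ← hA.eq, ← transpose_mul, hP.mul_eq_zero, transpose_zero]
  have hPP : P * P = P := hP.mul_eq_self_of_mul_eq_zero hP.mul_eq_zero
  apply inv_eq_left_inv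
  rw [Matrix.add_mul, Matrix.mul_add, Matrix.mul_add, h.mul_eq_one_sub hP, h.mul_kerProj hA hP,
    hPA, hPP, add_zero, zero_add, sub_add_cancel]

end IsMoorePenrose

open scoped ComplexOrder in
theorem posDef_conjTranspose_mul_mul_of_injective {𝕜 l m : Type*} [RCLike 𝕜] [Fintype l]
    [Fintype m] {A : Matrix m m 𝕜} (hA : A.PosSemidef) {B : Matrix m l 𝕜}
    (hAB : Function.Injective (A * B).mulVec) : (Bᴴ * A * B).PosDef := by
  have hBAB := hA.conjTranspose_mul_mul_same B
  refine .of_dotProduct_mulVec_pos hBAB.isHermitian fun x hx => ?_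
  refine (hBAB.dotProduct_mulVec_nonneg x).lt_of_ne' fun hzero => hx (hAB ?_)
  have hker : A *ᵥ (B *ᵥ x) = 0 := (hA.dotProduct_mulVec_zero_iff _).1 <| by
    rwa [star_mulVec, ← dotProduct_mulVec, mulVec_mulVec, mulVec_mulVec]
  rw [← mulVec_mulVec, hker, mulVec_zero]

section Blocks

variable {n s : ℕ} {A : Matrix (Fin n × Fin s) (Fin n × Fin s) ℝ}

theorem oneKron_mulVec_apply (c : Fin s → ℝ) (p : Fin n × Fin s) :
    (oneKron n s *ᵥ c) p = c p.2 := by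
  simp [oneKron, mulVec, dotProduct]

theorem oneKron_transpose_mul_oneKron (n s : ℕ) :
    (oneKron n s)ᵀ * oneKron n s = (n : ℝ) • (1 : Matrix (Fin s) (Fin s) ℝ) := by
  ext a b
  by_cases hab : a = b <;>
    simp [oneKron, Matrix.mul_apply, Fintype.sum_prod_type, hab, eq_comm]

theorem JKron_eq_oneKron_mul_transpose (n s : ℕ) :
    JKron n s = oneKron n s * (oneKron n s)ᵀ := by
  ext p q
  simp [JKron, oneKron, Matrix.mul_apply, Matrix.one_apply, eq_comm]

theorem inv_smul_JKron_mul_oneKron (n s : ℕ) [NeZero n] :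
    ((n : ℝ)⁻¹ • JKron n s) * oneKron n s = oneKron n s := by
  rw [JKron_eq_oneKron_mul_transpose, Matrix.smul_mul, Matrix.mul_assoc,
    oneKron_transpose_mul_oneKron, Matrix.mul_smul, Matrix.mul_one,
    inv_smul_smul₀ (NeZero.ne (n : ℝ))]

theorem mul_oneKron_eq_zero (hA : ∀ c : Fin s → ℝ, A *ᵥ (oneKron n s *ᵥ c) = 0) :
    A * oneKron n s = 0 :=
  ext_of_mulVec_single fun b => by
    rw [← mulVec_mulVec, zero_mulVec, hA]

theorem isKerProj_inv_smul_JKron [NeZero n]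
    (hA : ∀ v, A *ᵥ v = 0 ↔ ∃ c : Fin s → ℝ, v = oneKron n s *ᵥ c) :
    IsKerProj A ((n : ℝ)⁻¹ • JKron n s) where
  isSymm := by
    rw [IsSymm, JKron_eq_oneKron_mul_transpose, transpose_smul, transpose_mul,
      transpose_transpose]
  mul_eq_zero := by
    rw [JKron_eq_oneKron_mul_transpose, Matrix.mul_smul, ← Matrix.mul_assoc,
      mul_oneKron_eq_zero fun c => (hA _).2 ⟨c, rfl⟩, Matrix.zero_mul, smul_zero]
  mulVec_eq_self v hv := by
    obtain ⟨c, rfl⟩ := (hA v).1 hv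
    rw [mulVec_mulVec, inv_smul_JKron_mul_oneKron]

theorem blk_mul (A B : Matrix (Fin n × Fin s) (Fin n × Fin s) ℝ) (i j : Fin n) :
    blk (A * B) i j = ∑ k, blk A i k * blk B k j := by
  ext a b
  simp [blk, Matrix.mul_apply, Matrix.sum_apply, Fintype.sum_prod_type]

theorem bdiag_mul_oneKron_apply (A : Matrix (Fin n × Fin s) (Fin n × Fin s) ℝ) (p : Fin n × Fin s)
    (b : Fin s) : (bdiag A * oneKron n s) p b = blk A p.1 p.1 p.2 b := by
  simp [bdiag, oneKron, blk, Matrix.mul_apply, Fintype.sum_prod_type]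

theorem bdiag_mul_transpose_mul_oneKron (M : Matrix (Fin n × Fin s) (Fin s) ℝ) :
    bdiag (M * (oneKron n s)ᵀ) * oneKron n s = M := by
  ext p b
  rw [bdiag_mul_oneKron_apply]
  simp [blk, oneKron, Matrix.mul_apply]

theorem bdiag_sub_smul_one (A : Matrix (Fin n × Fin s) (Fin n × Fin s) ℝ) (c : ℝ) :
    bdiag (A - c • 1) = bdiag A - c • 1 := by
  ext p q
  by_cases hpq : p.1 = q.1 <;> simp [bdiag, hpq, Matrix.one_apply, Prod.ext_iff]

theorem isSymm_bdiag (hA : A.IsSymm) : (bdiag A).IsSymm :=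
  .ext fun ⟨i, a⟩ ⟨j, b⟩ => by
    rcases eq_or_ne i j with rfl | hij
    · simp [bdiag, hA.apply (i, a)]
    · simp [bdiag, hij, hij.symm]

theorem oneKron_transpose_mul_bdiag_mul_oneKron
    (A : Matrix (Fin n × Fin s) (Fin n × Fin s) ℝ) :
    (oneKron n s)ᵀ * (bdiag A * oneKron n s) = ∑ i, blk A i i := by
  ext a b
  rw [Matrix.mul_apply]
  simp only [bdiag_mul_oneKron_apply]
  simp [oneKron, Matrix.sum_apply, Fintype.sum_prod_type]

theorem sum_blk_add_inv_smul_JKron [NeZero n] (A : Matrix (Fin n × Fin s) (Fin n × Fin s) ℝ) :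
    ∑ i, blk (A + (n : ℝ)⁻¹ • JKron n s) i i = ∑ i, blk A i i + 1 := by
  have hblk (i : Fin n) : blk (A + (n : ℝ)⁻¹ • JKron n s) i i = blk A i i + (n : ℝ)⁻¹ • 1 := by
    ext a b
    simp [blk, JKron]
  simp only [hblk, Finset.sum_add_distrib, Finset.sum_const, Finset.card_univ, Fintype.card_fin]
  rw [← Nat.cast_smul_eq_nsmul ℝ, smul_inv_smul₀ (NeZero.ne (n : ℝ))]

theorem posDef_blk_self (hn : 2 ≤ n) (hA : A.PosSemidef)
    (hker : ∀ v, A *ᵥ v = 0 → ∃ c : Fin s → ℝ, v = oneKron n s *ᵥ c) (i : Fin n) :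
    (blk A i i).PosDef := by
  set S : Matrix (Fin n × Fin s) (Fin s) ℝ := (1 : Matrix _ _ ℝ).submatrix id (Prod.mk i) with hS
  have hSc (c : Fin s → ℝ) (p : Fin n × Fin s) : (S *ᵥ c) p = if p.1 = i then c p.2 else 0 := by
    simp [hS, mulVec, dotProduct, Matrix.one_apply, Prod.ext_iff, ite_and]
  have hblk : blk A i i = Sᴴ * A * S := by
    ext a b
    simp [hS, blk, Matrix.mul_apply, Matrix.one_apply]
  rw [hblk]
  refine posDef_conjTranspose_mul_mul_of_injective hA ?_
  refine (injective_iff_map_eq_zero (A * S).mulVecLin).2 fun c hc => ?_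
  obtain ⟨d, hd⟩ := hker (S *ᵥ c) (by rwa [mulVec_mulVec])
  have := Fin.nontrivial_iff_two_le.2 hn
  obtain ⟨j, hji⟩ := exists_ne i
  have hdi (a : Fin s) : c a = d a := by
    simpa [hSc, oneKron_mulVec_apply] using congrFun hd (i, a)
  have hdj (a : Fin s) : 0 = d a := by
    simpa [hSc, hji, oneKron_mulVec_apply] using congrFun hd (j, a)
  exact funext fun a => (hdi a).trans (hdj a).symm

end Blocks

section Resistance

variable {n s : ℕ} {L X : Matrix (Fin n × Fin s) (Fin n × Fin s) ℝ}

theorem resist_eq_bdiag_mul_JKron_add (X : Matrix (Fin n × Fin s) (Fin n × Fin s) ℝ) :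
    resist X = bdiag X * JKron n s + JKron n s * bdiag X - (2 : ℝ) • X := by
  ext p q
  simp [resist, bdiag, JKron, Matrix.mul_apply, Fintype.sum_prod_type, Matrix.one_apply]

theorem blk_resist_self (X : Matrix (Fin n × Fin s) (Fin n × Fin s) ℝ) (i : Fin n) :
    blk (resist X) i i = 0 := by
  ext a b
  simp only [blk, resist, of_apply, Matrix.zero_apply]
  ring

theorem resist_add_smul_JKron (X : Matrix (Fin n × Fin s) (Fin n × Fin s) ℝ) (c : ℝ) :
    resist (X + c • JKron n s) = resist X := by
  ext p q
  simp [resist, JKron]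
  ring

theorem transpose_mul_resist_mul_self (hX : X.IsSymm) {T : Matrix (Fin n × Fin s) (Fin s) ℝ}
    {c : ℝ} (hT : (oneKron n s)ᵀ * T = c • 1) :
    Tᵀ * resist X * T = c • (Tᵀ * (bdiag X * oneKron n s) + (bdiag X * oneKron n s)ᵀ * T) -
      (2 : ℝ) • (Tᵀ * X * T) := by
  have hT' : Tᵀ * oneKron n s = c • 1 := by
    simpa using congrArg Matrix.transpose hT
  have hleft : Tᵀ * (bdiag X * JKron n s) * T = c • (Tᵀ * (bdiag X * oneKron n s)) := by
    rw [JKron_eq_oneKron_mul_transpose]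
    simp only [Matrix.mul_assoc, hT, Matrix.mul_smul, Matrix.mul_one]
  have hright : Tᵀ * (JKron n s * bdiag X) * T = c • ((bdiag X * oneKron n s)ᵀ * T) := by
    rw [JKron_eq_oneKron_mul_transpose, transpose_mul, (isSymm_bdiag hX).eq]
    simp only [← Matrix.mul_assoc, hT', Matrix.smul_mul, Matrix.one_mul]
  rw [resist_eq_bdiag_mul_JKron_add, Matrix.mul_sub, Matrix.mul_add, Matrix.sub_mul,
    Matrix.add_mul, hleft, hright, ← smul_add, Matrix.mul_smul, Matrix.smul_mul]

theorem oneKron_transpose_mul_add_smul (hL : L.IsSymm) (hLE : L * oneKron n s = 0)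
    (x : Matrix (Fin n × Fin s) (Fin s) ℝ) (c : ℝ) :
    (oneKron n s)ᵀ * (L * x + c • oneKron n s) = (c * n) • 1 := by
  have hEL : (oneKron n s)ᵀ * L = 0 := by
    rw [← hL.eq, ← transpose_mul, hLE, transpose_zero]
  rw [Matrix.mul_add, ← Matrix.mul_assoc, hEL, Matrix.zero_mul, zero_add, Matrix.mul_smul,
    oneKron_transpose_mul_oneKron, smul_smul]

theorem transpose_mul_mul_add_smul_self (hL : L.IsSymm) (hX : X.IsSymm)
    (hLE : L * oneKron n s = 0) (hXE : X * oneKron n s = oneKron n s) (hLXL : L * X * L = L)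
    (x : Matrix (Fin n × Fin s) (Fin s) ℝ) (c : ℝ) :
    (L * x + c • oneKron n s)ᵀ * X * (L * x + c • oneKron n s) =
      xᵀ * L * x + (c ^ 2 * n) • 1 := by
  have hEX : (oneKron n s)ᵀ * X = (oneKron n s)ᵀ := by
    rw [← hX.eq, ← transpose_mul, hXE]
  have hleft : (L * x + c • oneKron n s)ᵀ * X = xᵀ * L * X + c • (oneKron n s)ᵀ := by
    rw [transpose_add, transpose_mul, hL.eq, transpose_smul, Matrix.add_mul, Matrix.smul_mul, hEX]
  have hLx : xᵀ * L * X * (L * x) = xᵀ * L * x := by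
    rw [← Matrix.mul_assoc, Matrix.mul_assoc xᵀ, Matrix.mul_assoc xᵀ, hLXL]
  have hLXE : xᵀ * L * X * oneKron n s = 0 := by
    rw [Matrix.mul_assoc, hXE, Matrix.mul_assoc, hLE, Matrix.mul_zero]
  rw [hleft, Matrix.add_mul, Matrix.smul_mul, oneKron_transpose_mul_add_smul hL hLE,
    Matrix.mul_add, Matrix.mul_smul, hLx, hLXE, smul_zero, add_zero, smul_smul]
  ring_nf

theorem tauMat_eq_add_bdiag (G : SimpleGraph (Fin n)) [DecidableRel G.Adj]
    (W : Fin n → Fin n → Matrix (Fin s) (Fin s) ℝ)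
    {R : Matrix (Fin n × Fin s) (Fin n × Fin s) ℝ} (hR : ∀ i, blk R i i = 0) :
    tauMat G W R = (2 : ℝ) • oneKron n s + bdiag (lap G W * R) * oneKron n s := by
  have hblk (i j : Fin n) : blk (lap G W) i j * blk R j i =
      if G.Adj i j then -((W i j)⁻¹ * blk R j i) else 0 := by
    rcases eq_or_ne i j with rfl | hij
    · simp [hR]
    · by_cases hadj : G.Adj i j
      · have hlap : blk (lap G W) i j = -(W i j)⁻¹ := by
          ext a b
          simp [blk, lap, hij, hadj]
        simp [hlap, hadj]
      · have hlap : blk (lap G W) i j = 0 := by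
          ext a b
          simp [blk, lap, hij, hadj]
        simp [hlap, hadj]
  ext p b
  rw [Matrix.add_apply, bdiag_mul_oneKron_apply, blk_mul]
  simp only [hblk, ← Finset.sum_filter, Finset.sum_neg_distrib]
  simp [tauMat, oneKron, Matrix.one_apply, sub_eq_add_neg]

theorem mul_resist (hLE : L * oneKron n s = 0)
    (hLX : L * X = 1 - (n : ℝ)⁻¹ • JKron n s) :
    L * resist X = (L * (bdiag X * oneKron n s) + (2 / n : ℝ) • oneKron n s) * (oneKron n s)ᵀ -
      (2 : ℝ) • 1 := by
  have hLJ : L * (JKron n s * bdiag X) = 0 := by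
    rw [JKron_eq_oneKron_mul_transpose, Matrix.mul_assoc, ← Matrix.mul_assoc L, hLE,
      Matrix.zero_mul]
  rw [resist_eq_bdiag_mul_JKron_add, Matrix.mul_sub, Matrix.mul_add, hLJ, Matrix.mul_smul, hLX,
    Matrix.add_mul, Matrix.smul_mul, JKron_eq_oneKron_mul_transpose]
  simp only [Matrix.mul_assoc]
  module

theorem tauMat_resist (G : SimpleGraph (Fin n)) [DecidableRel G.Adj]
    (W : Fin n → Fin n → Matrix (Fin s) (Fin s) ℝ) (hLE : lap G W * oneKron n s = 0)
    (hLX : lap G W * X = 1 - (n : ℝ)⁻¹ • JKron n s) :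
    tauMat G W (resist X) =
      lap G W * (bdiag X * oneKron n s) + (2 / n : ℝ) • oneKron n s := by
  rw [tauMat_eq_add_bdiag G W (blk_resist_self X), mul_resist hLE hLX, bdiag_sub_smul_one,
    Matrix.sub_mul, bdiag_mul_transpose_mul_oneKron, Matrix.smul_mul, Matrix.one_mul,
    add_sub_cancel]

theorem tauMat_transpose_mul_resist_mul_tauMat [NeZero n] (G : SimpleGraph (Fin n))
    [DecidableRel G.Adj] (W : Fin n → Fin n → Matrix (Fin s) (Fin s) ℝ) (hL : (lap G W).IsSymm)
    (hX : X.IsSymm) (hLE : lap G W * oneKron n s = 0) (hXE : X * oneKron n s = oneKron n s)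
    (hLX : lap G W * X = 1 - (n : ℝ)⁻¹ • JKron n s) :
    (tauMat G W (resist X))ᵀ * resist X * tauMat G W (resist X) =
      (2 : ℝ) • ((bdiag X * oneKron n s)ᵀ * lap G W * (bdiag X * oneKron n s)) +
        (8 / n : ℝ) • (∑ i, blk X i i - 1) := by
  have hn : (n : ℝ) ≠ 0 := NeZero.ne _
  have hτ := tauMat_resist G W hLE hLX
  set τ := tauMat G W (resist X)
  set x := bdiag X * oneKron n s with hx
  have hEτ : (oneKron n s)ᵀ * τ = (2 : ℝ) • 1 := by
    rw [hτ, oneKron_transpose_mul_add_smul hL hLE, div_mul_cancel₀ _ hn]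
  have hEx : (oneKron n s)ᵀ * x = ∑ i, blk X i i := oneKron_transpose_mul_bdiag_mul_oneKron X
  have hxE : xᵀ * oneKron n s = ∑ i, blk X i i := by
    rw [← hEx, hx, transpose_mul, (isSymm_bdiag hX).eq, Matrix.mul_assoc]
  have hxτ : xᵀ * τ = xᵀ * lap G W * x + (2 / n : ℝ) • ∑ i, blk X i i := by
    rw [hτ, Matrix.mul_add, Matrix.mul_smul, hxE, Matrix.mul_assoc]
  have hτx : τᵀ * x = xᵀ * lap G W * x + (2 / n : ℝ) • ∑ i, blk X i i := by
    rw [hτ, transpose_add, transpose_mul, hL.eq, transpose_smul, Matrix.add_mul, Matrix.smul_mul,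
      hEx]
  have hLXL : lap G W * X * lap G W = lap G W := by
    rw [hLX, Matrix.sub_mul, Matrix.one_mul, JKron_eq_oneKron_mul_transpose, Matrix.smul_mul,
      Matrix.mul_assoc, ← hL.eq, ← transpose_mul, hLE, transpose_zero, Matrix.mul_zero, smul_zero,
      sub_zero]
  have hτXτ : τᵀ * X * τ = xᵀ * lap G W * x + (4 / n : ℝ) • 1 := by
    rw [hτ, transpose_mul_mul_add_smul_self hL hX hLE hXE hLXL]
    congr 2
    field_simp
    norm_num
  rw [transpose_mul_resist_mul_self hX hEτ, ← hx, hτx, hxτ, hτXτ]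
  module

end Resistance

theorem tau_transpose_resist_tau_posDef_general
    (n s : ℕ) (hn : 2 ≤ n)
    (G : SimpleGraph (Fin n)) [DecidableRel G.Adj]
    (W : Fin n → Fin n → Matrix (Fin s) (Fin s) ℝ)
    (_hW : ∀ i j, G.Adj i j → IsUnit (W i j))
    (hPSD : (lap G W).PosSemidef)
    (hker : ∀ v : Fin n × Fin s → ℝ,
      lap G W *ᵥ v = 0 ↔ ∃ c : Fin s → ℝ, v = oneKron n s *ᵥ c)
    (X : Matrix (Fin n × Fin s) (Fin n × Fin s) ℝ)
    (hX : X = (lap G W + ((n : ℝ)⁻¹) • JKron n s)⁻¹)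
    (Ldag : Matrix (Fin n × Fin s) (Fin n × Fin s) ℝ)
    (hMP : IsMoorePenrose (lap G W) Ldag)
    (R : Matrix (Fin n × Fin s) (Fin n × Fin s) ℝ)
    (hR : R = resist Ldag)
    (xbar : Matrix (Fin n × Fin s) (Fin s) ℝ)
    (hxbar : xbar = bdiag X * oneKron n s) :
    ((tauMat G W R)ᵀ * R * tauMat G W R).PosDef ∧
      (tauMat G W R)ᵀ * R * tauMat G W R =
        (2 : ℝ) • (xbarᵀ * lap G W * xbar) +
          ((8 : ℝ) / n) • (∑ i : Fin n, blk X i i - 1) := by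
  have : NeZero n := ⟨by lia⟩
  have hL : (lap G W).IsSymm := hPSD.isHermitian
  have hP := isKerProj_inv_smul_JKron hker
  have hXK : X = Ldag + (n : ℝ)⁻¹ • JKron n s := hX.trans (hMP.inv_add_kerProj hL hP)
  have hKE : Ldag * oneKron n s = 0 := by
    rw [← inv_smul_JKron_mul_oneKron, ← Matrix.mul_assoc, hMP.mul_kerProj hL hP, Matrix.zero_mul]
  have hidentity : (tauMat G W R)ᵀ * R * tauMat G W R =
      (2 : ℝ) • (xbarᵀ * lap G W * xbar) + ((8 : ℝ) / n) • (∑ i, blk X i i - 1) := by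
    rw [hR, ← resist_add_smul_JKron Ldag (n : ℝ)⁻¹, ← hXK, hxbar]
    have hLE := mul_oneKron_eq_zero fun c => (hker _).2 ⟨c, rfl⟩
    refine tauMat_transpose_mul_resist_mul_tauMat G W hL ?_ hLE ?_ ?_
    · exact hXK ▸ (hMP.isSymm hL).add hP.isSymm
    · rw [hXK, Matrix.add_mul, hKE, inv_smul_JKron_mul_oneKron, zero_add]
    · rw [hXK, Matrix.mul_add, (hMP.commute hL).eq, hMP.mul_eq_one_sub hP, hP.mul_eq_zero,
        add_zero]
  have htrace : (∑ i, blk X i i - 1).PosDef := by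
    rw [hXK, sum_blk_add_inv_smul_JKron, add_sub_cancel_right]
    exact posDef_sum univ_nonempty fun i _ => posDef_blk_self hn (hMP.posSemidef hPSD)
      (fun v hv => (hker v).1 (hMP.mulVec_eq_zero_of_mulVec_eq_zero hL hv)) i
  have henergy : (xbarᵀ * lap G W * xbar).PosSemidef := hPSD.conjTranspose_mul_mul_same xbar
  have hn_pos : (0 : ℝ) < 8 / n := div_pos (by simp) (Nat.cast_pos.2 (NeZero.pos n))
  exact ⟨hidentity ▸ .posSemidef_add (henergy.smul zero_le_two) (htrace.smul hn_pos), hidentity⟩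

/-- `τᵀ R τ` is positive definite and equals
`2 x̄ᵀ L x̄ + (8/n)(Σᵢ X_{ii} - Iₛ)`, where `x̄ = X̄ (1 ⊗ Iₛ)`. -/
theorem tau_transpose_resist_tau_posDef
    (n s : ℕ) (hn : 2 ≤ n) (hs : 1 ≤ s)
    (G : SimpleGraph (Fin n)) [DecidableRel G.Adj] (hconn : G.Connected)
    (W : Fin n → Fin n → Matrix (Fin s) (Fin s) ℝ)
    (hWsymm : ∀ i j, W i j = W j i)
    (hWpd : ∀ i j, G.Adj i j → (W i j).PosDef)
    (hPSD : (lap G W).PosSemidef)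
    (hrank : (lap G W).rank = n * s - s)
    (hker : ∀ v : Fin n × Fin s → ℝ,
      lap G W *ᵥ v = 0 ↔ ∃ c : Fin s → ℝ, v = oneKron n s *ᵥ c)
    (X : Matrix (Fin n × Fin s) (Fin n × Fin s) ℝ)
    (hX : X = (lap G W + ((n : ℝ)⁻¹) • JKron n s)⁻¹)
    (Ldag : Matrix (Fin n × Fin s) (Fin n × Fin s) ℝ)
    (hMP : IsMoorePenrose (lap G W) Ldag)
    (R : Matrix (Fin n × Fin s) (Fin n × Fin s) ℝ)
    (hR : R = resist Ldag)
    (xbar : Matrix (Fin n × Fin s) (Fin s) ℝ)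
    (hxbar : xbar = bdiag X * oneKron n s) :
    ((tauMat G W R)ᵀ * R * tauMat G W R).PosDef ∧
      (tauMat G W R)ᵀ * R * tauMat G W R =
        (2 : ℝ) • (xbarᵀ * lap G W * xbar) +
          ((8 : ℝ) / n) • (∑ i : Fin n, blk X i i - 1) :=
  tau_transpose_resist_tau_posDef_general n s hn G W (fun i j hij => (hWpd i j hij).isUnit)
    hPSD hker X hX Ldag hMP R hR xbar hxbar
end
end
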